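/- Let a ≥ b > 0, K* = (0,a) × (0,b), w(x,y) = (x − a/2)(y − b/2)/(ab), S(w) = w(0,0)² + w(a,0)² + w(a,b)² + w(0,b)², and λ₁ = a²/12, λ₂ = b²/12. Then the two-sided bound (2/3)√(λ₂/λ₁) · S(w) ≤ |w|²_{H¹(K*)} ≤ (2/3)√(λ₁/λ₂) · S(w) holds. -/

import Mathlib

open MeasureTheory Matrix

/-- The open rectangle `K* = (0,a) × (0,b) ⊆ ℝ²`. -/
def rect (a b : ℝ) : Set (Fin 2 → ℝ) :=
  {x | 0 < x 0 ∧ x 0 < a ∧ 0 < x 1 ∧ x 1 < b}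

/-- The function `w(x,y) = (x − a/2)(y − b/2)/(ab)`. -/
noncomputable def wfun (a b : ℝ) : (Fin 2 → ℝ) → ℝ :=
  fun x => (x 0 - a / 2) * (x 1 - b / 2) / (a * b)

/-- Gradient of a scalar function on `ℝ²`, as the vector of partial derivatives. -/
noncomputable def grad (v : (Fin 2 → ℝ) → ℝ) (x : Fin 2 → ℝ) : Fin 2 → ℝ :=
  fun i => fderiv ℝ v x (Pi.single i 1)

/-- The stabilization term `S(v)`: the sum of the squared values of `v` at the four
vertices `(0,0), (a,0), (a,b), (0,b)` of the rectangle `(0,a) × (0,b)`. -/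
noncomputable def stab (a b : ℝ) (v : (Fin 2 → ℝ) → ℝ) : ℝ :=
  v ![0, 0] ^ 2 + v ![a, 0] ^ 2 + v ![a, b] ^ 2 + v ![0, b] ^ 2

/-!
The function `w` is a product of one affine factor per variable, so its energy splits into
one-dimensional integrals and `|w|²_{H¹(K*)} = (1/3)(b/a + a/b) S(w)`. Since `√(λ₂/λ₁) = b/a` and
`√(λ₁/λ₂) = a/b`, this is exactly the arithmetic mean of the two bounds.
-/

theorem grad_mul_of_hasDerivAt {f g : ℝ → ℝ} {x : Fin 2 → ℝ} {df dg : ℝ}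
    (hf : HasDerivAt f df (x 0)) (hg : HasDerivAt g dg (x 1)) :
    grad (fun y => f (y 0) * g (y 1)) x = ![df * g (x 1), f (x 0) * dg] := by
  have hfg := (hf.comp_hasFDerivAt x (hasFDerivAt_apply (𝕜 := ℝ) 0 x)).mul
    (hg.comp_hasFDerivAt x (hasFDerivAt_apply (𝕜 := ℝ) 1 x))
  have hderiv := HasFDerivAt.fderiv (f := fun y : Fin 2 → ℝ => f (y 0) * g (y 1)) hfg
  ext i
  fin_cases i <;> simp [grad, hderiv, mul_comm]

theorem stab_mul (f g : ℝ → ℝ) (a b : ℝ) :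
    stab a b (fun x => f (x 0) * g (x 1)) = (f 0 ^ 2 + f a ^ 2) * (g 0 ^ 2 + g b ^ 2) := by
  simp only [stab, cons_val_zero, cons_val_one]
  ring

theorem stab_nonneg (a b : ℝ) (v : (Fin 2 → ℝ) → ℝ) : 0 ≤ stab a b v := by
  unfold stab
  positivity

theorem rect_eq_pi_Ioo (a b : ℝ) :
    rect a b = Set.univ.pi fun i => Set.Ioo 0 (![a, b] i) := by
  ext x
  simp [rect, Fin.forall_fin_two, and_assoc]

theorem measurableSet_rect (a b : ℝ) : MeasurableSet (rect a b) :=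
  rect_eq_pi_Ioo a b ▸ .univ_pi fun _ => measurableSet_Ioo

theorem volume_restrict_rect (a b : ℝ) :
    volume.restrict (rect a b) =
      Measure.pi fun i => volume.restrict (Set.Ioo 0 (![a, b] i)) := by
  rw [rect_eq_pi_Ioo, volume_pi, Measure.restrict_pi_pi]

theorem setIntegral_rect_mul {𝕜 : Type*} [RCLike 𝕜] (f g : ℝ → 𝕜) (a b : ℝ) :
    ∫ x in rect a b, f (x 0) * g (x 1) =
      (∫ s in Set.Ioo 0 a, f s) * ∫ t in Set.Ioo 0 b, g t := by
  simpa [volume_restrict_rect] using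
    integral_fintype_prod_eq_prod (μ := fun i => volume.restrict (Set.Ioo 0 (![a, b] i))) ![f, g]

theorem integrableOn_rect_mul {R : Type*} [NormedCommRing R] {f g : ℝ → R} {a b : ℝ}
    (hf : IntegrableOn f (Set.Ioo 0 a)) (hg : IntegrableOn g (Set.Ioo 0 b)) :
    IntegrableOn (fun x => f (x 0) * g (x 1)) (rect a b) := by
  have hfg : ∀ i, Integrable (![f, g] i) (volume.restrict (Set.Ioo 0 (![a, b] i))) :=
    Fin.forall_fin_two.2 ⟨hf, hg⟩
  simpa [IntegrableOn, volume_restrict_rect] using Integrable.fintype_prod hfg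

theorem setIntegral_rect_sum_sq_grad_mul {f g f' g' : ℝ → ℝ} {a b : ℝ}
    (hf : ∀ s ∈ Set.Ioo 0 a, HasDerivAt f (f' s) s)
    (hg : ∀ t ∈ Set.Ioo 0 b, HasDerivAt g (g' t) t)
    (hf2 : IntegrableOn (fun s => f s ^ 2) (Set.Ioo 0 a))
    (hf'2 : IntegrableOn (fun s => f' s ^ 2) (Set.Ioo 0 a))
    (hg2 : IntegrableOn (fun t => g t ^ 2) (Set.Ioo 0 b))
    (hg'2 : IntegrableOn (fun t => g' t ^ 2) (Set.Ioo 0 b)) :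
    ∫ x in rect a b, ∑ i, grad (fun y => f (y 0) * g (y 1)) x i ^ 2 =
      (∫ s in Set.Ioo 0 a, f' s ^ 2) * (∫ t in Set.Ioo 0 b, g t ^ 2) +
        (∫ s in Set.Ioo 0 a, f s ^ 2) * ∫ t in Set.Ioo 0 b, g' t ^ 2 := by
  have hgrad : ∀ x ∈ rect a b, ∑ i, grad (fun y => f (y 0) * g (y 1)) x i ^ 2 =
      f' (x 0) ^ 2 * g (x 1) ^ 2 + f (x 0) ^ 2 * g' (x 1) ^ 2 := by
    rintro x ⟨h0, h0a, h1, h1b⟩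
    rw [grad_mul_of_hasDerivAt (hf _ ⟨h0, h0a⟩) (hg _ ⟨h1, h1b⟩)]
    simp [mul_pow]
  rw [setIntegral_congr_fun (measurableSet_rect a b) hgrad,
    integral_add (integrableOn_rect_mul hf'2 hg2) (integrableOn_rect_mul hf2 hg'2),
    setIntegral_rect_mul (fun s => f' s ^ 2) (fun t => g t ^ 2),
    setIntegral_rect_mul (fun s => f s ^ 2) (fun t => g' t ^ 2)]

theorem integral_sub_midpoint_sq (c d : ℝ) :
    ∫ t in c..d, (t - (c + d) / 2) ^ 2 = (d - c) ^ 3 / 12 := by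
  rw [intervalIntegral.integral_comp_sub_right (fun t => t ^ 2), integral_pow]
  ring

/-- The centred coordinate `(t − c/2)/c` on `(0,c)`; the function `w` is the product of one such
factor in each variable. -/
noncomputable def centredCoord (c t : ℝ) : ℝ := (t - c / 2) / c

theorem wfun_eq_centredCoord_mul (a b : ℝ) :
    wfun a b = fun x => centredCoord a (x 0) * centredCoord b (x 1) :=
  funext fun _ => mul_div_mul_comm _ _ _ _

theorem hasDerivAt_centredCoord (c t : ℝ) : HasDerivAt (centredCoord c) c⁻¹ t := by
  simpa [centredCoord] using! ((hasDerivAt_id t).sub_const (c / 2)).div_const c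

theorem integrableOn_centredCoord_sq (c : ℝ) :
    IntegrableOn (fun t => centredCoord c t ^ 2) (Set.Ioo 0 c) := by
  have hcont : Continuous fun t => centredCoord c t ^ 2 := by
    unfold centredCoord
    fun_prop
  exact hcont.integrableOn_Icc.mono_set Set.Ioo_subset_Icc_self

theorem setIntegral_centredCoord_sq {c : ℝ} (hc : 0 < c) :
    ∫ t in Set.Ioo 0 c, centredCoord c t ^ 2 = c / 12 := by
  simp only [centredCoord, div_pow]
  rw [← integral_Ioc_eq_integral_Ioo, ← intervalIntegral.integral_of_le hc.le,
    intervalIntegral.integral_div]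
  have hmoment : ∫ t in (0 : ℝ)..c, (t - c / 2) ^ 2 = c ^ 3 / 12 := by
    simpa only [zero_add, sub_zero] using integral_sub_midpoint_sq 0 c
  rw [hmoment]
  field_simp

theorem stab_wfun {a b : ℝ} (ha : a ≠ 0) (hb : b ≠ 0) : stab a b (wfun a b) = 1 / 4 := by
  rw [wfun_eq_centredCoord_mul, stab_mul]
  simp only [centredCoord]
  field_simp
  ring

theorem setIntegral_rect_sum_sq_grad_wfun {a b : ℝ} (ha : 0 < a) (hb : 0 < b) :
    ∫ x in rect a b, ∑ i, grad (wfun a b) x i ^ 2 =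
      1 / 3 * (b / a + a / b) * stab a b (wfun a b) := by
  have hconst (c : ℝ) : IntegrableOn (fun _ => c⁻¹ ^ 2) (Set.Ioo 0 c) :=
    integrableOn_const (by simp)
  have hderiv {c : ℝ} (hc : 0 < c) : ∫ _ in Set.Ioo 0 c, c⁻¹ ^ 2 = c⁻¹ := by
    rw [setIntegral_const, Real.volume_real_Ioo_of_le hc.le, smul_eq_mul, sub_zero, pow_two,
      mul_inv_cancel_left₀ hc.ne']
  rw [stab_wfun ha.ne' hb.ne', wfun_eq_centredCoord_mul,
    setIntegral_rect_sum_sq_grad_mul (fun s _ => hasDerivAt_centredCoord a s)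
      (fun t _ => hasDerivAt_centredCoord b t) (integrableOn_centredCoord_sq a) (hconst a)
      (integrableOn_centredCoord_sq b) (hconst b),
    setIntegral_centredCoord_sq ha, setIntegral_centredCoord_sq hb, hderiv ha, hderiv hb]
  ring

theorem sqrt_sq_div_div_sq_div {c d k : ℝ} (hc : 0 ≤ c) (hd : 0 ≤ d) (hk : k ≠ 0) :
    Real.sqrt ((c ^ 2 / k) / (d ^ 2 / k)) = c / d := by
  rw [div_div_div_cancel_right₀ hk, ← div_pow, Real.sqrt_sq (div_nonneg hc hd)]

/-- With `λ₁ = a²/12`, `λ₂ = b²/12`, the two-sided bound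
`(2/3)√(λ₂/λ₁) S(w) ≤ |w|²_{H¹(K*)} ≤ (2/3)√(λ₁/λ₂) S(w)` holds. -/
theorem stab_two_sided_bound_wfun (a b : ℝ) (hb : 0 < b) (hba : b ≤ a) :
    (2 / 3) * Real.sqrt ((b ^ 2 / 12) / (a ^ 2 / 12)) * stab a b (wfun a b)
        ≤ (∫ x in rect a b, ∑ i, (grad (wfun a b) x i) ^ 2)
    ∧ (∫ x in rect a b, ∑ i, (grad (wfun a b) x i) ^ 2)
        ≤ (2 / 3) * Real.sqrt ((a ^ 2 / 12) / (b ^ 2 / 12)) * stab a b (wfun a b) := by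
  have ha : 0 < a := hb.trans_le hba
  have hratio : b / a ≤ a / b := ((div_le_one ha).2 hba).trans ((one_le_div hb).2 hba)
  have hscaled := mul_le_mul_of_nonneg_right hratio (stab_nonneg a b (wfun a b))
  rw [setIntegral_rect_sum_sq_grad_wfun ha hb, sqrt_sq_div_div_sq_div hb.le ha.le (by norm_num),
    sqrt_sq_div_div_sq_div ha.le hb.le (by norm_num)]
  constructor <;> linarith
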